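/- As N → ∞, ∑_{squarefree n ≥ 1 : every prime factor of n is ≤ N} 1/φ(n) ∼ e^γ · log N, i.e. the ratio of the two sides tends to 1. -/

import Mathlib

open Filter
open scoped Classical

/-!
The squarefree `N`-smooth numbers are the divisors of the primorial of `N`, and `1/φ` is
multiplicative, so the sum equals `∏ (1 - 1/p)⁻¹` over the primes `p ≤ N`. It remains to prove
Mertens' third theorem.

Legendre's formula for `log N!` gives `∑ (log p)/p = log N + O(1)`, and summation by parts turns
this into the existence of `L`, the limit of `log ∏ (1 - 1/p)⁻¹ - log log N`. To find `L`, put the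
product on a logarithmic scale and compare it with the harmonic numbers:
`D(u) = log ∏_{p ≤ e^u} (1 - 1/p)⁻¹ - H_⌊u⌋` tends to `L - γ`, so by the Abelian theorem for the
Laplace transform `s ∫₀^∞ D(u) e^(-su) du` has the same limit as `s → 0+`. On the other hand this
transform is `∑ -log (1 - 1/p) p^(-s) + log (1 - e^(-s))`. The Euler product replaces the sum
by `log ζ(1 + s)` up to an error tending to `0`, so the transform behaves like
`log (s ζ(1 + s))`, which tends to `0` because `ζ` has residue `1` at `1`. Hence `L = γ`.
-/

/-- The Mertens product `∏ (1 - 1/p)⁻¹` over the primes `p ≤ N`, whose asymptotics are Mertens'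
third theorem. -/
noncomputable def mertensProduct (N : ℕ) : ℝ :=
  ∏ p ∈ N.primesLE, (1 - (p : ℝ)⁻¹)⁻¹

section TotientSum

open Nat

lemma sum_divisors_one_div_totient_of_squarefree {m : ℕ} (hm : Squarefree m) :
    ∑ d ∈ m.divisors, (1 : ℝ) / φ d = ∏ p ∈ m.primeFactors, (1 - (p : ℝ)⁻¹)⁻¹ := by
  let f : ArithmeticFunction ℝ := ⟨fun n => 1 / (φ n : ℝ), by simp⟩
  have hf : f.IsMultiplicative := by
    refine ArithmeticFunction.IsMultiplicative.iff_ne_zero.2 ⟨by simp [f], fun _ _ hmn => ?_⟩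
    simp [f, totient_mul hmn, mul_comm]
  have hfactor : ∀ p ∈ m.primeFactors, 1 + f p = (1 - (p : ℝ)⁻¹)⁻¹ := by
    intro p hp
    have hp := prime_of_mem_primeFactors hp
    have h1 : (1 : ℝ) < p := by exact_mod_cast hp.one_lt
    have hfp : f p = 1 / ((p : ℝ) - 1) := by simp [f, totient_prime hp, Nat.cast_sub hp.one_le]
    have : (p : ℝ) - 1 ≠ 0 := by linarith
    rw [hfp]
    field_simp
    ring
  rw [← Finset.prod_congr rfl hfactor, hf.prodPrimeFactors_one_add_of_squarefree hm]
  rfl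

lemma dvd_primorial_iff_smooth_squarefree {n N : ℕ} :
    n ∣ primorial N ↔
      0 < n ∧ (∀ p : ℕ, p.Prime → p ∣ n → p ≤ N) ∧ ∀ p : ℕ, p.Prime → ¬ p ^ 2 ∣ n := by
  have hsq : (∀ p : ℕ, p.Prime → ¬ p ^ 2 ∣ n) ↔ Squarefree n := by
    simp only [squarefree_iff_prime_squarefree, sq]
  rw [hsq]
  constructor
  · intro hn
    exact ⟨pos_of_dvd_of_pos hn (primorial_pos N),
      fun p hp hpn => hp.dvd_primorial_iff.1 (hpn.trans hn),
      (squarefree_primorial N).squarefree_of_dvd hn⟩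
  · rintro ⟨-, hsmooth, hn⟩
    rw [← prod_primeFactors_of_squarefree hn, primorial_eq_prod_primesLE]
    refine Finset.prod_dvd_prod_of_subset _ _ _ fun p hp => mem_primesLE.2 ⟨?_, ?_⟩
    · exact hsmooth p (prime_of_mem_primeFactors hp) (dvd_of_mem_primeFactors hp)
    · exact prime_of_mem_primeFactors hp

lemma tsum_squarefree_smooth_one_div_totient (N : ℕ) :
    (∑' n : {n : ℕ // 0 < n ∧ (∀ p : ℕ, p.Prime → p ∣ n → p ≤ N) ∧
        ∀ p : ℕ, p.Prime → ¬ p ^ 2 ∣ n}, (1 : ℝ) / φ n) = mertensProduct N := by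
  have hset : {n : ℕ | 0 < n ∧ (∀ p : ℕ, p.Prime → p ∣ n → p ≤ N) ∧
      ∀ p : ℕ, p.Prime → ¬ p ^ 2 ∣ n} = ((primorial N).divisors : Set ℕ) := by
    ext n
    simp only [Set.mem_ofPred_eq, ← dvd_primorial_iff_smooth_squarefree, Finset.mem_coe,
      mem_divisors, ne_eq, primorial_ne_zero, not_false_eq_true, and_true]
  calc ∑' n : {n : ℕ | 0 < n ∧ (∀ p : ℕ, p.Prime → p ∣ n → p ≤ N) ∧
        ∀ p : ℕ, p.Prime → ¬ p ^ 2 ∣ n}, (1 : ℝ) / φ n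
      = ∑ d ∈ (primorial N).divisors, (1 : ℝ) / φ d := by
        rw [hset, Finset.tsum_subtype' _ fun d : ℕ => (1 : ℝ) / φ d]
    _ = mertensProduct N := by
        rw [sum_divisors_one_div_totient_of_squarefree (squarefree_primorial N),
          primeFactors_primorial, mertensProduct]

end TotientSum

section MertensFirst

open Real

lemma log_factorial_eq_sum_primesLE (N : ℕ) :
    log N.factorial = ∑ p ∈ N.primesLE, N.factorial.factorization p * log p := by
  rw [log_nat_eq_sum_factorization, Finsupp.sum_of_support_subset (s := N.primesLE)]
  · intro p hp
    have hp : p ∈ N.factorial.primeFactors := by rwa [← Nat.support_factorization]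
    have hprime := Nat.prime_of_mem_primeFactors hp
    exact Nat.mem_primesLE.2 ⟨hprime.dvd_factorial.1 (Nat.dvd_of_mem_primeFactors hp), hprime⟩
  · simp

lemma div_sub_one_lt_factorization_factorial {p : ℕ} (hp : p.Prime) (N : ℕ) :
    (N : ℝ) / p - 1 < N.factorial.factorization p := by
  have hle : N / p ≤ N.factorial.factorization p := by
    rw [Nat.factorization_factorial hp (Nat.lt_add_of_pos_right two_pos)]
    simpa using Finset.single_le_sum (f := fun i => N / p ^ i) (fun _ _ => Nat.zero_le _)
      (show 1 ∈ Finset.Ico 1 (Nat.log p N + 2) by simp)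
  calc (N : ℝ) / p - 1 < (N / p : ℕ) := by
        rw [← Nat.floor_div_eq_div (K := ℝ)]
        exact Nat.sub_one_lt_floor _
    _ ≤ N.factorial.factorization p := by exact_mod_cast hle

lemma factorization_factorial_le_div_sub_one {p : ℕ} (hp : p.Prime) (N : ℕ) :
    (N.factorial.factorization p : ℝ) ≤ N / (p - 1) :=
  calc (N.factorial.factorization p : ℝ) ≤ (N / (p - 1) : ℕ) := by
        exact_mod_cast Nat.factorization_factorial_le_div_pred hp N
    _ ≤ N / (p - 1 : ℕ) := Nat.cast_div_le
    _ = N / (p - 1) := by rw [Nat.cast_pred hp.pos]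

lemma mul_log_sub_le_log_factorial (N : ℕ) : N * log N - N ≤ log N.factorial := by
  rcases eq_or_ne N 0 with rfl | hN
  · simp
  · have hlogN := log_natCast_nonneg N
    have hlogpi : 0 ≤ log (2 * π) := log_nonneg (by linarith [pi_gt_three])
    linarith [Stirling.le_log_factorial_stirling hN]

lemma log_factorial_le_mul_log (N : ℕ) : log N.factorial ≤ N * log N := by
  rw [← log_pow]
  exact log_le_log (by positivity) (by exact_mod_cast N.factorial_le_pow)

lemma summable_log_div_mul_sub_one : Summable fun n : ℕ => log n / (n * (n - 1)) := by
  have hsum : Summable fun n : ℕ => 4 * (n : ℝ) ^ (-(3 / 2) : ℝ) :=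
    (summable_nat_rpow.2 (by norm_num)).mul_left 4
  refine .of_norm_bounded_eventually_nat hsum ?_
  filter_upwards [eventually_ge_atTop 2] with n hn
  have hn : (2 : ℝ) ≤ n := by exact_mod_cast hn
  have hlog : log n ≤ 2 * (n : ℝ) ^ (1 / 2 : ℝ) := by
    linarith [log_le_rpow_div (x := n) (by linarith) (ε := 1 / 2) (by norm_num)]
  rw [norm_of_nonneg (div_nonneg (log_natCast_nonneg n) (mul_nonneg (by linarith) (by linarith)))]
  calc log n / (n * (n - 1)) ≤ 2 * (n : ℝ) ^ (1 / 2 : ℝ) / (n * (n / 2)) := by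
        gcongr
        linarith
    _ = 4 * ((n : ℝ) ^ (1 / 2 : ℝ) / (n : ℝ) ^ (2 : ℝ)) := by
        rw [rpow_two]
        field_simp
        norm_num
    _ = 4 * (n : ℝ) ^ (-(3 / 2) : ℝ) := by
        rw [← rpow_sub (by linarith)]
        norm_num

lemma sum_primesLE_log_div_le {N : ℕ} (hN : N ≠ 0) :
    ∑ p ∈ N.primesLE, log p / p ≤ log N + log 4 := by
  have hNpos : (0 : ℝ) < N := by positivity
  have hfactorial : N * ∑ p ∈ N.primesLE, log p / p - Chebyshev.theta N ≤ log N.factorial := by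
    rw [log_factorial_eq_sum_primesLE, Chebyshev.theta_eq_sum_primesLE_log, Finset.mul_sum,
      ← Finset.sum_sub_distrib]
    refine Finset.sum_le_sum fun p hp => ?_
    calc N * (log p / p) - log p = (N / p - 1) * log p := by ring
      _ ≤ N.factorial.factorization p * log p :=
        mul_le_mul_of_nonneg_right
          (div_sub_one_lt_factorization_factorial (Nat.prime_of_mem_primesLE hp) N).le
          (log_natCast_nonneg p)
  have htheta := Chebyshev.theta_le_log4_mul_x hNpos.le
  refine le_of_mul_le_mul_left ?_ hNpos
  linarith [log_factorial_le_mul_log N]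

lemma log_sub_le_sum_primesLE_log_div {N : ℕ} (hN : N ≠ 0) :
    log N - (1 + ∑' n : ℕ, log n / (n * (n - 1))) ≤ ∑ p ∈ N.primesLE, log p / p := by
  have hNpos : (0 : ℝ) < N := by positivity
  have hcorrection : ∑ p ∈ N.primesLE, log p / (p * (p - 1)) ≤
      ∑' n : ℕ, log n / (n * (n - 1)) := by
    refine summable_log_div_mul_sub_one.sum_le_tsum _ fun n _ => ?_
    rcases n.eq_zero_or_pos with rfl | hn
    · simp
    · have : (1 : ℝ) ≤ n := by exact_mod_cast hn
      exact div_nonneg (log_natCast_nonneg n) (mul_nonneg n.cast_nonneg (by linarith))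
  have hfactorial : log N.factorial ≤
      N * (∑ p ∈ N.primesLE, log p / p + ∑ p ∈ N.primesLE, log p / (p * (p - 1))) := by
    rw [log_factorial_eq_sum_primesLE, ← Finset.sum_add_distrib, Finset.mul_sum]
    refine Finset.sum_le_sum fun p hp => ?_
    have hprime := Nat.prime_of_mem_primesLE hp
    have hp1 : (1 : ℝ) < p := by exact_mod_cast hprime.one_lt
    have : (p : ℝ) - 1 ≠ 0 := by linarith
    calc N.factorial.factorization p * log p ≤ N / (p - 1) * log p :=
          mul_le_mul_of_nonneg_right (factorization_factorial_le_div_sub_one hprime N)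
            (log_natCast_nonneg p)
      _ = N * (log p / p + log p / (p * (p - 1))) := by
          field_simp
          ring
  refine le_of_mul_le_mul_left ?_ hNpos
  nlinarith [mul_log_sub_le_log_factorial N]

/-- **Mertens' first theorem**. -/
theorem exists_abs_sum_primesLE_log_div_sub_log_le :
    ∃ B : ℝ, ∀ N : ℕ, N ≠ 0 → |∑ p ∈ N.primesLE, log p / p - log N| ≤ B := by
  refine ⟨max (1 + ∑' n : ℕ, log n / (n * (n - 1))) (log 4), fun N hN => ?_⟩
  rw [abs_sub_le_iff]
  exact ⟨le_max_of_le_right (by linarith [sum_primesLE_log_div_le hN]),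
    le_max_of_le_left (by linarith [log_sub_le_sum_primesLE_log_div hN])⟩

end MertensFirst

section PartialSummation

open Finset Real Topology

variable {y : ℕ → ℝ} {C : ℝ}

lemma exists_tendsto_sum_sub_div_sub_log (hpos : ∀ n, 0 < y n) (hmono : Monotone y)
    (hC : ∀ n, y (n + 1) - y n ≤ C) :
    ∃ c, Tendsto (fun n => ∑ i ∈ range n, (y (i + 1) - y i) / y (i + 1) - log (y n)) atTop
      (𝓝 c) := by
  set u : ℕ → ℝ := fun n => ∑ i ∈ range n, (y (i + 1) - y i) / y (i + 1) - log (y n) with hu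
  have hstep (n : ℕ) :
      u (n + 1) = u n + (y (n + 1) - y n) / y (n + 1) - log (y (n + 1) / y n) := by
    simp only [hu, sum_range_succ, log_div (hpos _).ne' (hpos n).ne']
    ring
  have hanti : Antitone u := antitone_nat_of_succ_le fun n => by
    have h := one_sub_inv_le_log_of_pos (div_pos (hpos (n + 1)) (hpos n))
    rw [inv_div, one_sub_div (hpos _).ne'] at h
    linarith [hstep n]
  have hdrop (n : ℕ) : C / y (n + 1) - C / y n ≤ u (n + 1) - u n := by
    have hy := hpos n
    have hy' := hpos (n + 1)
    have hlog := log_le_sub_one_of_pos (div_pos hy' hy)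
    have hsq : 0 ≤ (y (n + 1) - y n) * (C - (y (n + 1) - y n)) / (y n * y (n + 1)) :=
      div_nonneg (mul_nonneg (sub_nonneg.2 (hmono n.le_succ)) (sub_nonneg.2 (hC n)))
        (mul_pos hy hy').le
    have hid : (y (n + 1) - y n) / y (n + 1) - (y (n + 1) / y n - 1) - (C / y (n + 1) - C / y n) =
        (y (n + 1) - y n) * (C - (y (n + 1) - y n)) / (y n * y (n + 1)) := by
      field_simp
      ring
    linarith [hstep n]
  have hC0 : 0 ≤ C := (sub_nonneg.2 (hmono (Nat.zero_le 1))).trans (hC 0)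
  have hbdd (n : ℕ) : u 0 - C / y 0 ≤ u n := by
    have hmonoDiff : Monotone fun n => u n - C / y n :=
      monotone_nat_of_le_succ fun n => by linarith [hdrop n]
    linarith [hmonoDiff n.zero_le, div_nonneg hC0 (hpos n).le]
  exact ⟨_, tendsto_atTop_ciInf hanti ⟨_, Set.forall_mem_range.2 hbdd⟩⟩

/-- If the partial sums of `a` stay close to `y`, then summation by parts (Dirichlet's test)
lets one replace `a i` by the increment of `y` in `∑ a i / y (i + 1)`. -/
lemma exists_tendsto_sum_div_sub_log {a : ℕ → ℝ} {B : ℝ} (hpos : ∀ n, 0 < y n)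
    (hmono : Monotone y) (htop : Tendsto y atTop atTop) (hC : ∀ n, y (n + 1) - y n ≤ C)
    (hB : ∀ n, |∑ i ∈ range n, a i - y n| ≤ B) :
    ∃ c, Tendsto (fun n => ∑ i ∈ range n, a i / y (i + 1) - log (y n)) atTop (𝓝 c) := by
  have hanti : Antitone fun i => (y (i + 1))⁻¹ := fun i j hij =>
    inv_anti₀ (hpos _) (hmono (Nat.add_le_add_right hij 1))
  have hzero : Tendsto (fun i => (y (i + 1))⁻¹) atTop (𝓝 0) :=
    (htop.comp (tendsto_add_atTop_nat 1)).inv_tendsto_atTop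
  have hbdd (n : ℕ) : ‖∑ i ∈ range n, (a i - (y (i + 1) - y i))‖ ≤ B + |y 0| := by
    rw [sum_sub_distrib, sum_range_sub, norm_eq_abs, ← sub_add]
    exact (abs_add_le _ _).trans (by gcongr; exact hB n)
  obtain ⟨c₁, hc₁⟩ := cauchySeq_tendsto_of_complete
    (hanti.cauchySeq_series_mul_of_tendsto_zero_of_bounded hzero hbdd)
  obtain ⟨c₂, hc₂⟩ := exists_tendsto_sum_sub_div_sub_log hpos hmono hC
  refine ⟨c₁ + c₂, (hc₁.add hc₂).congr fun n => ?_⟩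
  rw [← add_sub_assoc, ← sum_add_distrib]
  congr 1
  refine sum_congr rfl fun i _ => ?_
  rw [smul_eq_mul]
  ring

end PartialSummation

section MertensSecond

open Real Topology

lemma sum_primesLE_add_two {M : Type*} [AddCommMonoid M] (g : ℕ → M) (n : ℕ) :
    ∑ p ∈ (n + 2).primesLE, g p =
      (∑ i ∈ Finset.range n, if (i + 3).Prime then g (i + 3) else 0) + g 2 := by
  rw [Nat.primesLE_eq_filter_range, Finset.sum_filter]
  simp [Finset.sum_range_succ', Nat.not_prime_zero, Nat.not_prime_one, Nat.prime_two]

lemma log_add_one_sub_log_le_one {x : ℝ} (hx : 1 ≤ x) : log (x + 1) - log x ≤ 1 := by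
  rw [← log_div (by linarith) (by linarith), add_div, div_self (by linarith)]
  have hinv : 1 / x ≤ 1 := (div_le_one (by linarith)).2 hx
  linarith [log_le_sub_one_of_pos (show 0 < 1 + 1 / x by positivity)]

/-- **Mertens' second theorem**, without the value of the limit. -/
theorem exists_tendsto_sum_primesLE_inv_sub_log_log :
    ∃ M, Tendsto (fun N : ℕ => ∑ p ∈ N.primesLE, (p : ℝ)⁻¹ - log (log N)) atTop (𝓝 M) := by
  obtain ⟨B, hB⟩ := exists_abs_sum_primesLE_log_div_sub_log_le
  let y : ℕ → ℝ := fun n => log (n + 2 : ℕ)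
  let a : ℕ → ℝ := fun i =>
    if (i + 3).Prime then log (i + 3 : ℕ) / (i + 3 : ℕ) else 0
  have hpos (n : ℕ) : 0 < y n := log_pos (by exact_mod_cast (by lia : 1 < n + 2))
  have hmono : Monotone y := fun m n hmn =>
    log_le_log (by positivity) (by exact_mod_cast Nat.add_le_add_right hmn 2)
  have htop : Tendsto y atTop atTop :=
    tendsto_log_atTop.comp (tendsto_natCast_atTop_atTop.comp (tendsto_add_atTop_nat 2))
  have hstep (n : ℕ) : y (n + 1) - y n ≤ 1 := by
    have h := log_add_one_sub_log_le_one (x := (n + 2 : ℕ)) (by exact_mod_cast (by lia : 1 ≤ n + 2))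
    exact_mod_cast h
  have hclose (n : ℕ) : |∑ i ∈ Finset.range n, a i - y n| ≤ B + |log 2 / 2| := by
    have hsum := sum_primesLE_add_two (fun p => log p / p) n
    have hdiff : ∑ i ∈ Finset.range n, a i - y n =
        (∑ p ∈ (n + 2).primesLE, log p / p - log (n + 2 : ℕ)) - log 2 / 2 := by
      rw [hsum, Nat.cast_two]
      simp only [a, y]
      ring
    rw [hdiff]
    exact (abs_sub _ _).trans (by gcongr; exact hB _ (by lia))
  obtain ⟨c, hc⟩ := exists_tendsto_sum_div_sub_log hpos hmono htop hstep hclose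
  refine ⟨c + 2⁻¹, (tendsto_add_atTop_iff_nat 2).1 ((hc.add_const 2⁻¹).congr fun n => ?_)⟩
  have hterm (i : ℕ) : a i / y (i + 1) = if (i + 3).Prime then ((i + 3 : ℕ) : ℝ)⁻¹ else 0 := by
    simp only [a, y, ite_div, zero_div, div_div_cancel_left' (hpos (i + 1)).ne']
  rw [sum_primesLE_add_two, Finset.sum_congr rfl fun i _ => hterm i, Nat.cast_two]
  ring

end MertensSecond

section LogMertensProduct

open Real Topology

lemma abs_log_one_sub_add_le {x : ℝ} (hx : |x| ≤ 1 / 2) : |log (1 - x) + x| ≤ 2 * x ^ 2 := by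
  have h := abs_log_sub_add_sum_range_le (hx.trans_lt (by norm_num)) 1
  simp only [Finset.sum_range_one, Nat.cast_zero, zero_add, pow_one, div_one, Nat.reduceAdd,
    sq_abs] at h
  calc |log (1 - x) + x| = |x + log (1 - x)| := by rw [add_comm]
    _ ≤ x ^ 2 / (1 - |x|) := h
    _ ≤ x ^ 2 / (1 / 2) := by gcongr; linarith
    _ = 2 * x ^ 2 := by ring

lemma inv_le_half_of_prime {p : ℕ} (hp : p.Prime) : (p : ℝ)⁻¹ ≤ 1 / 2 := by
  rw [one_div]
  exact inv_anti₀ two_pos (by exact_mod_cast hp.two_le)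

lemma neg_log_one_sub_inv_nonneg_of_prime {p : ℕ} (hp : p.Prime) : 0 ≤ -log (1 - (p : ℝ)⁻¹) := by
  have := inv_le_half_of_prime hp
  exact neg_nonneg.2 (log_nonpos (by linarith) (sub_le_self 1 (by positivity)))

lemma one_sub_inv_pos_of_prime {p : ℕ} (hp : p.Prime) : 0 < 1 - (p : ℝ)⁻¹ := by
  linarith [inv_le_half_of_prime hp]

lemma mertensProduct_pos (N : ℕ) : 0 < mertensProduct N :=
  Finset.prod_pos fun _ hp => inv_pos.2 (one_sub_inv_pos_of_prime (Nat.prime_of_mem_primesLE hp))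

lemma log_mertensProduct (N : ℕ) :
    log (mertensProduct N) = ∑ p ∈ N.primesLE, -log (1 - (p : ℝ)⁻¹) := by
  rw [mertensProduct, log_prod fun p hp =>
    (inv_pos.2 (one_sub_inv_pos_of_prime (Nat.prime_of_mem_primesLE hp))).ne']
  simp only [log_inv]

lemma monotone_log_mertensProduct : Monotone fun N => log (mertensProduct N) := fun M N h => by
  simp only [log_mertensProduct]
  exact Finset.sum_le_sum_of_subset_of_nonneg (Nat.primesLE_mono h) fun p hp _ =>
    neg_log_one_sub_inv_nonneg_of_prime (Nat.prime_of_mem_primesLE hp)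

lemma tendsto_sum_primesLE_of_hasSum {M : Type*} [AddCommMonoid M] [TopologicalSpace M]
    {g : ℕ → M} {a : M} (h : HasSum (fun p : Nat.Primes => g p) a) :
    Tendsto (fun N : ℕ => ∑ p ∈ N.primesLE, g p) atTop (𝓝 a) := by
  have hind : HasSum (Set.indicator {p | p.Prime} g) a := hasSum_subtype_iff_indicator.1 h
  refine (hind.tendsto_sum_nat.comp (tendsto_add_atTop_nat 1)).congr fun N => ?_
  rw [Function.comp_apply, Nat.primesLE_eq_filter_range, Finset.sum_filter]
  simp only [Set.indicator_apply, Set.mem_ofPred_eq]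

lemma summable_primes_mul_inv_sq (C : ℝ) : Summable fun p : Nat.Primes => C * (p : ℝ)⁻¹ ^ 2 := by
  refine Summable.mul_left C ((Nat.Primes.summable_rpow (r := -2)).2 (by norm_num) |>.congr ?_)
  intro p
  rw [rpow_neg p.1.cast_nonneg, rpow_two, inv_pow]

lemma summable_log_one_sub_inv_add_inv :
    Summable fun p : Nat.Primes => log (1 - (p : ℝ)⁻¹) + (p : ℝ)⁻¹ :=
  .of_norm_bounded (summable_primes_mul_inv_sq 2) fun p =>
    abs_log_one_sub_add_le ((abs_of_nonneg (by positivity)).trans_le (inv_le_half_of_prime p.2))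

lemma exists_tendsto_log_mertensProduct_sub_log_log :
    ∃ L, Tendsto (fun N : ℕ => log (mertensProduct N) - log (log N)) atTop (𝓝 L) := by
  obtain ⟨M, hM⟩ := exists_tendsto_sum_primesLE_inv_sub_log_log
  refine ⟨_, (hM.sub
    (tendsto_sum_primesLE_of_hasSum (g := fun p => log (1 - (p : ℝ)⁻¹) + (p : ℝ)⁻¹)
      summable_log_one_sub_inv_add_inv.hasSum)).congr fun N => ?_⟩
  rw [log_mertensProduct, Finset.sum_add_distrib, Finset.sum_neg_distrib]
  ring

end LogMertensProduct

section Laplace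

open MeasureTheory Set Topology

lemma hasSum_laplace_of_hasSum_jumps {ι : Type*} [Countable ι] {w t : ι → ℝ} {A : ℝ → ℝ} {s : ℝ}
    (hs : 0 < s) (hw : ∀ i, 0 ≤ w i) (ht : ∀ i, 0 ≤ t i)
    (hA : ∀ u, 0 < u → HasSum (fun i => if t i ≤ u then w i else 0) (A u))
    (hsum : Summable fun i => w i * Real.exp (-s * t i)) :
    HasSum (fun i => w i * Real.exp (-s * t i))
      (s * ∫ u in Ioi 0, A u * Real.exp (-s * u)) := by
  let F : ι → ℝ → ℝ := fun i => (Ici (t i)).indicator fun u => w i * Real.exp (-s * u)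
  have hs' : -s < 0 := neg_neg_of_pos hs
  have hexp : IntegrableOn (fun u => Real.exp (-s * u)) (Ici 0) :=
    (integrableOn_Ici_iff_integrableOn_Ioi (by simp)).2 (integrableOn_exp_mul_Ioi hs' 0)
  have hF (i : ι) : IntegrableOn (F i) (Ici 0) :=
    (hexp.const_mul (w i)).indicator measurableSet_Ici
  have hF_nonneg (i : ι) (u : ℝ) : 0 ≤ F i u :=
    indicator_nonneg (fun u _ => mul_nonneg (hw i) (Real.exp_pos _).le) u
  have hF_integral (i : ι) : ∫ u in Ici 0, F i u = w i * Real.exp (-s * t i) / s := by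
    rw [setIntegral_indicator measurableSet_Ici, Ici_inter_Ici, sup_of_le_right (ht i),
      integral_const_mul, integral_Ici_eq_integral_Ioi, integral_exp_mul_Ioi hs']
    field_simp
  have hswap := hasSum_integral_of_summable_integral_norm hF (by
    simp only [Real.norm_of_nonneg (hF_nonneg _ _), hF_integral]
    exact hsum.div_const s)
  have hF_tsum : ∫ u in Ici 0, ∑' i, F i u = ∫ u in Ioi 0, A u * Real.exp (-s * u) := by
    rw [integral_Ici_eq_integral_Ioi]
    refine setIntegral_congr_fun measurableSet_Ioi fun u hu => HasSum.tsum_eq ?_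
    refine ((hA u hu).mul_right (Real.exp (-s * u))).congr_fun fun i => ?_
    simp only [F, indicator_apply, mem_Ici, ite_mul, zero_mul]
  rw [hF_tsum] at hswap
  refine (hswap.mul_left s).congr_fun fun i => ?_
  rw [hF_integral, mul_div_cancel₀ _ hs.ne']

lemma tendsto_mul_laplace_of_tendsto {D : ℝ → ℝ} {B c : ℝ} (hD : Measurable D)
    (hB : ∀ u, 0 < u → |D u| ≤ B) (hc : Tendsto D atTop (𝓝 c)) :
    Tendsto (fun s : ℝ => s * ∫ u in Ioi 0, D u * Real.exp (-s * u)) (𝓝[>] 0) (𝓝 c) := by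
  have hlim : Tendsto (fun s : ℝ => ∫ v in Ioi 0, D (v / s) * Real.exp (-v)) (𝓝[>] 0)
      (𝓝 (∫ v in Ioi 0, c * Real.exp (-v))) := by
    refine tendsto_integral_filter_of_dominated_convergence (fun v => B * Real.exp (-v))
      ?_ ?_ ((integrableOn_exp_neg_Ioi 0).const_mul B) ?_
    · refine .of_forall fun s => Measurable.aestronglyMeasurable ?_
      exact (hD.comp (measurable_id.div_const s)).mul (by fun_prop)
    · filter_upwards [self_mem_nhdsWithin] with s hs
      filter_upwards [ae_restrict_mem measurableSet_Ioi] with v hv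
      rw [norm_mul, Real.norm_of_nonneg (Real.exp_pos _).le]
      exact mul_le_mul_of_nonneg_right (hB _ (div_pos hv hs)) (Real.exp_pos _).le
    · filter_upwards [ae_restrict_mem measurableSet_Ioi] with v hv
      exact (hc.comp (tendsto_inv_nhdsGT_zero.const_mul_atTop hv)).mul_const _
  rw [integral_const_mul, integral_exp_neg_Ioi_zero, mul_one] at hlim
  refine hlim.congr' ?_
  filter_upwards [self_mem_nhdsWithin] with s (hs : 0 < s)
  calc ∫ v in Ioi 0, D (v / s) * Real.exp (-v)
      = s * ∫ u in Ioi 0, D (s * u / s) * Real.exp (-(s * u)) := by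
        rw [integral_comp_mul_left_Ioi (fun v => D (v / s) * Real.exp (-v)) 0 hs, mul_zero,
          smul_eq_mul, mul_inv_cancel_left₀ hs.ne']
    _ = s * ∫ u in Ioi 0, D u * Real.exp (-s * u) := by
        simp only [mul_div_cancel_left₀ _ hs.ne', neg_mul]

lemma exists_abs_sub_le_of_monotone_of_tendsto {f g : ℝ → ℝ} {c : ℝ} (hf : Monotone f)
    (hg : Monotone g) (hfg : Tendsto (fun u => f u - g u) atTop (𝓝 c)) (a : ℝ) :
    ∃ B, ∀ u, a < u → |f u - g u| ≤ B := by
  obtain ⟨U, hU⟩ := eventually_atTop.1 (hfg.abs.eventually_le_const (lt_add_one |c|))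
  refine ⟨max (|c| + 1) (max (f U - g a) (g U - f a)), fun u hu => ?_⟩
  rcases le_total U u with hUu | huU
  · exact le_max_of_le_left (hU u hUu)
  · refine le_max_of_le_right ?_
    rw [abs_eq_max_neg, neg_sub]
    exact max_le_max (sub_le_sub (hf huU) (hg hu.le)) (sub_le_sub (hg huU) (hf hu.le))

end Laplace

section EulerProduct

open Real Topology

lemma hasSum_neg_log_one_sub_rpow {s : ℝ} (hs : 1 < s) :
    HasSum (fun p : Nat.Primes => -log (1 - (p : ℝ) ^ (-s))) (log (∑' n : ℕ, 1 / (n : ℝ) ^ s)) := by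
  let f : ℕ →*₀ ℝ :=
    { toFun := fun n => (n : ℝ) ^ (-s)
      map_zero' := by simp [zero_rpow (show -s ≠ 0 by linarith)]
      map_one' := by simp
      map_mul' := fun m n => by rw [Nat.cast_mul, mul_rpow m.cast_nonneg n.cast_nonneg] }
  have hf : Summable f := summable_nat_rpow.2 (by linarith)
  have hzeta : ∑' n, f n = ∑' n : ℕ, 1 / (n : ℝ) ^ s :=
    tsum_congr fun n => (rpow_neg n.cast_nonneg s).trans (one_div _).symm
  have hpos : 0 < ∑' n, f n := hf.tsum_pos (fun n => rpow_nonneg n.cast_nonneg _) 1 (by simp)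
  have hfactor (p : Nat.Primes) : 1 - f p ≠ 0 :=
    (sub_pos.2 (rpow_lt_one_of_one_lt_of_neg (by exact_mod_cast p.2.one_lt) (by linarith))).ne'
  rw [← hzeta]
  refine ((EulerProduct.eulerProduct_completely_multiplicative_hasProd hf.norm).log
    hpos.ne').congr fun S => ?_
  rw [log_prod fun p _ => inv_ne_zero (hfactor p)]
  exact Finset.sum_congr rfl fun p _ => log_inv _

lemma abs_log_one_sub_mul_sub_le {x y : ℝ} (hx : |x| ≤ 1 / 2) (hy : 0 ≤ y) (hy' : y ≤ 1) :
    |log (1 - x * y) - log (1 - x) * y| ≤ 4 * x ^ 2 := by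
  have hxy : |x * y| ≤ 1 / 2 := by
    rw [abs_mul, abs_of_nonneg hy]
    exact (mul_le_of_le_one_right (abs_nonneg x) hy').trans hx
  calc |log (1 - x * y) - log (1 - x) * y|
      = |(log (1 - x * y) + x * y) - (log (1 - x) + x) * y| := by ring_nf
    _ ≤ |log (1 - x * y) + x * y| + |log (1 - x) + x| * y := by
        rw [← abs_of_nonneg hy, ← abs_mul, abs_of_nonneg hy]
        exact abs_sub _ _
    _ ≤ 2 * (x * y) ^ 2 + 2 * x ^ 2 * y := by
        gcongr
        · exact abs_log_one_sub_add_le hxy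
        · exact abs_log_one_sub_add_le hx
    _ ≤ 4 * x ^ 2 := by
        nlinarith [mul_nonneg (sq_nonneg x) (sub_nonneg.2 hy'), mul_nonneg (sq_nonneg x) hy,
          mul_nonneg (mul_nonneg (sq_nonneg x) hy) (sub_nonneg.2 hy')]

lemma abs_log_one_sub_inv_mul_rpow_sub_le {s : ℝ} (hs : 0 ≤ s) (p : Nat.Primes) :
    |log (1 - (p : ℝ)⁻¹ * (p : ℝ) ^ (-s)) - log (1 - (p : ℝ)⁻¹) * (p : ℝ) ^ (-s)| ≤
      4 * (p : ℝ)⁻¹ ^ 2 :=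
  abs_log_one_sub_mul_sub_le ((abs_of_nonneg (by positivity)).trans_le (inv_le_half_of_prime p.2))
    (by positivity) (rpow_le_one_of_one_le_of_nonpos (by exact_mod_cast p.2.one_le) (by linarith))

lemma tendsto_tsum_log_one_sub_inv_mul_rpow_sub :
    Tendsto (fun s : ℝ => ∑' p : Nat.Primes,
        (log (1 - (p : ℝ)⁻¹ * (p : ℝ) ^ (-s)) - log (1 - (p : ℝ)⁻¹) * (p : ℝ) ^ (-s)))
      (𝓝[>] 0) (𝓝 0) := by
  have hterm (p : Nat.Primes) : Tendsto (fun s : ℝ =>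
      log (1 - (p : ℝ)⁻¹ * (p : ℝ) ^ (-s)) - log (1 - (p : ℝ)⁻¹) * (p : ℝ) ^ (-s))
      (𝓝[>] 0) (𝓝 0) := by
    have hp : (p : ℝ) ≠ 0 := by exact_mod_cast p.2.ne_zero
    have hcont : Continuous fun s : ℝ => (p : ℝ) ^ (-s) := by fun_prop (disch := assumption)
    have hpow : Tendsto (fun s : ℝ => (p : ℝ) ^ (-s)) (𝓝[>] 0) (𝓝 1) :=
      (hcont.tendsto' 0 1 (by simp)).mono_left nhdsWithin_le_nhds
    have hlog := ((hpow.const_mul (p : ℝ)⁻¹).const_sub 1).log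
      (by simpa using (one_sub_inv_pos_of_prime p.2).ne')
    simpa using hlog.sub (hpow.const_mul (log (1 - (p : ℝ)⁻¹)))
  have hbound : ∀ᶠ s : ℝ in 𝓝[>] 0, ∀ p : Nat.Primes,
      ‖log (1 - (p : ℝ)⁻¹ * (p : ℝ) ^ (-s)) - log (1 - (p : ℝ)⁻¹) * (p : ℝ) ^ (-s)‖ ≤
        4 * (p : ℝ)⁻¹ ^ 2 := by
    filter_upwards [self_mem_nhdsWithin] with s hs p
    exact abs_log_one_sub_inv_mul_rpow_sub_le (le_of_lt hs) p
  simpa only [tsum_zero] using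
    tendsto_tsum_of_dominated_convergence (summable_primes_mul_inv_sq 4) hterm hbound

lemma hasSum_neg_log_one_sub_inv_mul_rpow {s : ℝ} (hs : 0 < s) :
    HasSum (fun p : Nat.Primes => -log (1 - (p : ℝ)⁻¹) * (p : ℝ) ^ (-s))
      (log (∑' n : ℕ, 1 / (n : ℝ) ^ (1 + s)) + ∑' p : Nat.Primes,
        (log (1 - (p : ℝ)⁻¹ * (p : ℝ) ^ (-s)) - log (1 - (p : ℝ)⁻¹) * (p : ℝ) ^ (-s))) := by
  have hsum : Summable fun p : Nat.Primes =>
      log (1 - (p : ℝ)⁻¹ * (p : ℝ) ^ (-s)) - log (1 - (p : ℝ)⁻¹) * (p : ℝ) ^ (-s) :=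
    .of_norm_bounded (summable_primes_mul_inv_sq 4) (abs_log_one_sub_inv_mul_rpow_sub_le hs.le)
  refine ((hasSum_neg_log_one_sub_rpow (lt_add_of_pos_right 1 hs)).add hsum.hasSum).congr_fun
    fun p => ?_
  rw [neg_add, rpow_add (by exact_mod_cast p.2.pos), rpow_neg_one]
  ring

end EulerProduct

section LaplaceTransforms

open MeasureTheory Set Topology
open Real (log exp)

lemma hasSum_primes_ite_le {M : Type*} [AddCommMonoid M] [TopologicalSpace M] (g : ℕ → M) (N : ℕ) :
    HasSum (fun p : Nat.Primes => if (p : ℕ) ≤ N then g p else 0) (∑ p ∈ N.primesLE, g p) := by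
  have hind : ∑ p ∈ N.primesLE, g p =
      ∑ p ∈ N.primesLE, indicator {p | p.Prime} (fun p => if p ≤ N then g p else 0) p := by
    refine Finset.sum_congr rfl fun p hp => ?_
    obtain ⟨hle, hprime⟩ := Nat.mem_primesLE.1 hp
    rw [indicator_of_mem (mem_ofPred.2 hprime), if_pos hle]
  rw [hind]
  refine hasSum_subtype_iff_indicator.2 (hasSum_sum_of_ne_finset_zero fun p hp => ?_)
  rw [indicator_apply_eq_zero]
  exact fun hprime => if_neg fun hle => hp (Nat.mem_primesLE.2 ⟨hle, hprime⟩)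

lemma mul_laplace_log_mertensProduct {s : ℝ} (hs : 0 < s) :
    s * ∫ u in Ioi 0, log (mertensProduct ⌊exp u⌋₊) * exp (-s * u) =
      ∑' p : Nat.Primes, -log (1 - (p : ℝ)⁻¹) * (p : ℝ) ^ (-s) := by
  have hexp (p : Nat.Primes) : exp (-s * log p) = (p : ℝ) ^ (-s) := by
    rw [Real.rpow_def_of_pos (by exact_mod_cast p.2.pos), mul_comm]
  have hjumps (u : ℝ) : HasSum (fun p : Nat.Primes =>
      if log p ≤ u then -log (1 - (p : ℝ)⁻¹) else 0) (log (mertensProduct ⌊exp u⌋₊)) := by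
    rw [log_mertensProduct]
    refine (hasSum_primes_ite_le (fun p => -log (1 - (p : ℝ)⁻¹)) ⌊exp u⌋₊).congr_fun fun p => ?_
    simp only [Nat.le_floor_iff (Real.exp_pos u).le,
      Real.log_le_iff_le_exp (show (0 : ℝ) < p by exact_mod_cast p.2.pos)]
  have hlaplace := hasSum_laplace_of_hasSum_jumps hs
    (fun p : Nat.Primes => neg_log_one_sub_inv_nonneg_of_prime p.2)
    (fun p => Real.log_natCast_nonneg p) (fun u _ => hjumps u)
    (by simpa only [hexp] using (hasSum_neg_log_one_sub_inv_mul_rpow hs).summable)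
  simpa only [hexp] using hlaplace.tsum_eq.symm

lemma mul_laplace_log_mertensProduct_pos {s : ℝ} (hs : 0 < s) :
    0 < s * ∫ u in Ioi 0, log (mertensProduct ⌊exp u⌋₊) * exp (-s * u) := by
  rw [mul_laplace_log_mertensProduct hs]
  refine (hasSum_neg_log_one_sub_inv_mul_rpow hs).summable.tsum_pos
    (fun p => mul_nonneg (neg_log_one_sub_inv_nonneg_of_prime p.2) (by positivity))
    ⟨2, Nat.prime_two⟩ ?_
  refine mul_pos (neg_pos.2 (Real.log_neg ?_ ?_)) ?_ <;> norm_num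
  positivity

lemma hasSum_inv_mul_exp_neg_mul {s : ℝ} (hs : 0 < s) :
    HasSum (fun n : ℕ => (n : ℝ)⁻¹ * exp (-s * n)) (-log (1 - exp (-s))) := by
  have hlt : |exp (-s)| < 1 := by
    rw [abs_of_pos (Real.exp_pos _), Real.exp_lt_one_iff]
    exact neg_neg_of_pos hs
  rw [← hasSum_nat_add_iff' 1]
  simp only [Finset.range_one, Finset.sum_singleton, Nat.cast_zero, inv_zero, zero_mul, sub_zero]
  refine (Real.hasSum_pow_div_log_of_abs_lt_one hlt).congr_fun fun n => ?_
  rw [← Real.exp_nat_mul, div_eq_inv_mul, Nat.cast_succ, mul_comm (-s)]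

lemma mul_laplace_harmonic {s : ℝ} (hs : 0 < s) :
    s * ∫ u in Ioi 0, (harmonic ⌊u⌋₊ : ℝ) * exp (-s * u) = -log (1 - exp (-s)) := by
  have hjumps (u : ℝ) (hu : 0 < u) :
      HasSum (fun n : ℕ => if (n : ℝ) ≤ u then (n : ℝ)⁻¹ else 0) (harmonic ⌊u⌋₊ : ℝ) := by
    have hharmonic : (harmonic ⌊u⌋₊ : ℝ) =
        ∑ n ∈ Finset.Icc 1 ⌊u⌋₊, if (n : ℝ) ≤ u then (n : ℝ)⁻¹ else 0 := by
      rw [harmonic_eq_sum_Icc, Rat.cast_sum]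
      refine Finset.sum_congr rfl fun n hn => ?_
      rw [if_pos ((Nat.le_floor_iff hu.le).1 (Finset.mem_Icc.1 hn).2), Rat.cast_inv,
        Rat.cast_natCast]
    rw [hharmonic]
    refine hasSum_sum_of_ne_finset_zero fun n hn => ?_
    rcases n.eq_zero_or_pos with rfl | hpos
    · simp
    · exact if_neg fun hle => hn (Finset.mem_Icc.2 ⟨hpos, Nat.le_floor hle⟩)
  have hsum := hasSum_inv_mul_exp_neg_mul hs
  exact (hasSum_laplace_of_hasSum_jumps hs (fun n => by positivity) (fun n => n.cast_nonneg)
    hjumps hsum.summable).unique hsum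

lemma mul_laplace_harmonic_pos {s : ℝ} (hs : 0 < s) :
    0 < s * ∫ u in Ioi 0, (harmonic ⌊u⌋₊ : ℝ) * exp (-s * u) := by
  rw [mul_laplace_harmonic hs, neg_pos]
  have hlt : exp (-s) < 1 := Real.exp_lt_one_iff.2 (neg_neg_of_pos hs)
  exact Real.log_neg (sub_pos.2 hlt) (sub_lt_self 1 (Real.exp_pos _))

lemma mul_laplace_log_mertensProduct_sub_harmonic {s : ℝ} (hs : 0 < s) :
    s * ∫ u in Ioi 0, (log (mertensProduct ⌊exp u⌋₊) - harmonic ⌊u⌋₊) * exp (-s * u) =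
      (∑' p : Nat.Primes, -log (1 - (p : ℝ)⁻¹) * (p : ℝ) ^ (-s)) + log (1 - exp (-s)) := by
  -- The Bochner integral of a nonintegrable function is `0`, so nonzero integrals converge.
  have hprod := Integrable.of_integral_ne_zero
    (right_ne_zero_of_mul (mul_laplace_log_mertensProduct_pos hs).ne')
  have hharmonic := Integrable.of_integral_ne_zero
    (right_ne_zero_of_mul (mul_laplace_harmonic_pos hs).ne')
  simp only [sub_mul]
  rw [integral_sub hprod hharmonic, mul_sub, mul_laplace_log_mertensProduct hs,
    mul_laplace_harmonic hs, sub_neg_eq_add]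

end LaplaceTransforms

section MertensThird

open Real Topology

lemma tendsto_log_mul_tsum_one_div_rpow :
    Tendsto (fun s : ℝ => log (s * ∑' n : ℕ, 1 / (n : ℝ) ^ (1 + s))) (𝓝[>] 0) (𝓝 0) := by
  have hshift : Tendsto (fun s : ℝ => 1 + s) (𝓝[>] 0) (𝓝[>] 1) := by
    refine tendsto_nhdsWithin_iff.2 ⟨?_, ?_⟩
    · exact tendsto_nhdsWithin_of_tendsto_nhds ((continuous_const_add 1).tendsto' 0 1 (add_zero 1))
    · filter_upwards [self_mem_nhdsWithin] with s (hs : 0 < s)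
      exact lt_add_of_pos_right 1 hs
  simpa only [Function.comp_def, add_sub_cancel_left, log_one] using
    (tendsto_sub_mul_tsum_nat_rpow.comp hshift).log one_ne_zero

lemma tendsto_log_one_sub_exp_neg_div :
    Tendsto (fun s : ℝ => log ((1 - exp (-s)) / s)) (𝓝[>] 0) (𝓝 0) := by
  have hderiv : HasDerivAt (fun s : ℝ => 1 - exp (-s)) 1 0 := by
    simpa using ((hasDerivAt_neg (0 : ℝ)).exp).const_sub 1
  simpa [div_eq_inv_mul] using hderiv.tendsto_slope_zero_right.log one_ne_zero

lemma tendsto_mul_laplace_log_mertensProduct_sub_harmonic :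
    Tendsto (fun s : ℝ => s * ∫ u in Set.Ioi 0,
      (log (mertensProduct ⌊exp u⌋₊) - harmonic ⌊u⌋₊) * exp (-s * u)) (𝓝[>] 0) (𝓝 0) := by
  have hlim := (tendsto_log_mul_tsum_one_div_rpow.add tendsto_log_one_sub_exp_neg_div).add
    tendsto_tsum_log_one_sub_inv_mul_rpow_sub
  simp only [add_zero] at hlim
  refine hlim.congr' ?_
  filter_upwards [self_mem_nhdsWithin] with s (hs : 0 < s)
  have hzeta : 0 < ∑' n : ℕ, 1 / (n : ℝ) ^ (1 + s) :=
    (summable_one_div_nat_rpow.2 (lt_add_of_pos_right 1 hs)).tsum_pos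
      (fun n => by positivity) 1 (by simp)
  have hexp : 0 < 1 - exp (-s) := sub_pos.2 (exp_lt_one_iff.2 (neg_neg_of_pos hs))
  rw [mul_laplace_log_mertensProduct_sub_harmonic hs,
    (hasSum_neg_log_one_sub_inv_mul_rpow hs).tsum_eq, log_mul hs.ne' hzeta.ne',
    log_div hexp.ne' hs.ne']
  ring

lemma tendsto_log_floor_exp_div_floor :
    Tendsto (fun u : ℝ => log ⌊exp u⌋₊ / ⌊u⌋₊) atTop (𝓝 1) := by
  have hfloor : Tendsto (fun u : ℝ => log (⌊exp u⌋₊ / exp u)) atTop (𝓝 0) := by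
    simpa only [Function.comp_def, log_one] using
      ((tendsto_nat_floor_div_atTop (R := ℝ)).comp tendsto_exp_atTop).log one_ne_zero
  have hratio := ((hfloor.div_atTop tendsto_id).add_const 1).div
    (tendsto_nat_floor_div_atTop (R := ℝ)) one_ne_zero
  rw [zero_add, div_one] at hratio
  refine hratio.congr' ?_
  filter_upwards [eventually_ge_atTop 1] with u hu
  have hexp : (⌊exp u⌋₊ : ℝ) ≠ 0 :=
    Nat.cast_ne_zero.2 (Nat.floor_pos.2 (one_le_exp (by linarith))).ne'
  have hu0 : u ≠ 0 := by linarith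
  simp only [Pi.div_apply, id_eq]
  rw [log_div hexp (exp_pos _).ne', log_exp]
  field_simp
  ring

lemma tendsto_log_mertensProduct_sub_harmonic {L : ℝ}
    (hL : Tendsto (fun N : ℕ => log (mertensProduct N) - log (log N)) atTop (𝓝 L)) :
    Tendsto (fun u : ℝ => log (mertensProduct ⌊exp u⌋₊) - harmonic ⌊u⌋₊) atTop
      (𝓝 (L - eulerMascheroniConstant)) := by
  have hfloor : Tendsto (fun u : ℝ => ⌊u⌋₊) atTop atTop := tendsto_nat_floor_atTop
  have hlim := ((hL.comp (hfloor.comp tendsto_exp_atTop)).sub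
    (tendsto_harmonic_sub_log.comp hfloor)).add (tendsto_log_floor_exp_div_floor.log one_ne_zero)
  rw [log_one, add_zero] at hlim
  refine hlim.congr' ?_
  filter_upwards [eventually_ge_atTop 1] with u hu
  have htwo : 2 ≤ ⌊exp u⌋₊ := Nat.le_floor (by rw [Nat.cast_two]; linarith [add_one_le_exp u])
  have hlog : log ⌊exp u⌋₊ ≠ 0 := (log_pos (by exact_mod_cast htwo)).ne'
  have hu0 : (⌊u⌋₊ : ℝ) ≠ 0 := Nat.cast_ne_zero.2 (Nat.floor_pos.2 hu).ne'
  simp only [Function.comp_apply]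
  rw [log_div hlog hu0]
  ring

lemma monotone_harmonic : Monotone fun n => (harmonic n : ℝ) := fun m n hmn => by
  have h : harmonic m ≤ harmonic n :=
    Finset.sum_le_sum_of_subset_of_nonneg (Finset.range_mono hmn) fun _ _ _ => by positivity
  exact Rat.cast_le.2 h

lemma tendsto_log_mertensProduct_sub_log_log :
    Tendsto (fun N : ℕ => log (mertensProduct N) - log (log N)) atTop
      (𝓝 eulerMascheroniConstant) := by
  obtain ⟨L, hL⟩ := exists_tendsto_log_mertensProduct_sub_log_log
  have hD := tendsto_log_mertensProduct_sub_harmonic hL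
  have hprod : Monotone fun u : ℝ => log (mertensProduct ⌊exp u⌋₊) :=
    monotone_log_mertensProduct.comp (Nat.floor_mono.comp exp_monotone)
  have hharmonic : Monotone fun u : ℝ => (harmonic ⌊u⌋₊ : ℝ) :=
    monotone_harmonic.comp Nat.floor_mono
  obtain ⟨B, hB⟩ := exists_abs_sub_le_of_monotone_of_tendsto hprod hharmonic hD 0
  have hlaplace :=
    tendsto_mul_laplace_of_tendsto (hprod.measurable.sub hharmonic.measurable) hB hD
  have hconst : L - eulerMascheroniConstant = 0 :=
    tendsto_nhds_unique hlaplace tendsto_mul_laplace_log_mertensProduct_sub_harmonic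
  rwa [← sub_eq_zero.1 hconst]

/-- **Mertens' third theorem**. -/
theorem tendsto_mertensProduct_div_exp_mul_log :
    Tendsto (fun N : ℕ => mertensProduct N / (exp eulerMascheroniConstant * log N)) atTop
      (𝓝 1) := by
  have hlim := (tendsto_log_mertensProduct_sub_log_log.sub_const eulerMascheroniConstant).rexp
  rw [sub_self, exp_zero] at hlim
  refine hlim.congr' ?_
  filter_upwards [eventually_gt_atTop 1] with N hN
  have hlog : 0 < log N := log_pos (by exact_mod_cast hN)
  rw [exp_sub, exp_sub, exp_log (mertensProduct_pos N), exp_log hlog, div_div, mul_comm]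

end MertensThird

/-- **Corollary 1 for `k = 2`.** The sum of `1/φ(n)` over squarefree positive integers `n`
all of whose prime factors are `≤ N` is asymptotic to `e^γ log N` as `N → ∞`. -/
theorem squarefree_totient_sum_asymp :
    Tendsto
      (fun N : ℕ =>
        (∑' n : {n : ℕ // 0 < n ∧ (∀ p : ℕ, p.Prime → p ∣ n → p ≤ N) ∧
              ∀ p : ℕ, p.Prime → ¬ p ^ 2 ∣ n},
            (1 : ℝ) / (Nat.totient (n : ℕ) : ℝ)) /
          (Real.exp Real.eulerMascheroniConstant * Real.log N))
      atTop (nhds 1) := by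
  simp only [tsum_squarefree_smooth_one_div_totient]
  exact tendsto_mertensProduct_div_exp_mul_log
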